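/- arXiv:quant-ph/0507045 — 2 statements merged into one kernel-verified Lean document; each statement's English description precedes it below -/
import Mathlib

section
/- Let dB, dC be positive integers, m and J positive integers, p : Fin m → ℝ with p i ≥ 0 and ∑ i, p i = 1, and v_1, …, v_m : (Fin dB) × (Fin dC) → ℂ unit vectors. Let M_1, …, M_J be matrices on (Fin dB) × (Fin dC) such that each M_j is positive semidefinite, each M_j^Γ is positive semidefinite, and ∑ j, M_j = 1. Define the joint distribution P (i,j) = p i * Re (Matrix.trace (φ_{v_i} * M_j)), its marginals P_X i = ∑ j, P (i,j) and P_Y j = ∑ i, P (i,j), and the mutual information I(X:Y) = H(P_X) + H(P_Y) − H(P), where H denotes base-2 Shannon entropy. Let ρ = ∑ i, p i • φ_{v_i} be the average state. Then I(X:Y) ≤ S(tr_C ρ) + S(tr_B ρ) − ∑ i, p i * E(v_i). -/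
/-!
The inequality is the derivative at an endpoint of Hadamard's three lines theorem.

Regard a vector `v` of `ℂ^dB ⊗ ℂ^dC` as its coefficient matrix `V`, so that the reduced states of
`φ_v` are `V * Vᴴ` and `(Vᴴ * V)ᵀ`. Let `σ_B`, `σ_C` be the reduced states of the average state,
let `q j` be the marginal distribution of the outcome, and put
`a i j = log (P(j | i) / q j)`. Consider the entire functions

  `X_i z = σ_B ^ (z / 2) * (V_i V_iᴴ) ^ (-z / 2) * V_i * (σ_Cᵀ) ^ (z / 2)`,
  `G z = ∑ i, p i * ∑ j, exp (z * a i j) * ⟨X_i (conj z) | M_j | X_i z⟩`,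

both bounded on the strip `0 ≤ Re z ≤ 1`.

* At `z = 0` we have `X_i 0 = V_i` and `G 0 = 1`. Moreover `G' 0` equals
  `log 2 * (I(X:Y) - S(σ_B) - S(σ_C) + ∑ i, p i * E(v_i))`: the factors `exp (z * a i j)` give the
  mutual information, and the three matrix powers give the three entropies, because `∑ j, M_j = 1`
  turns the form `∑ j, ⟨· | M_j | ·⟩` into the Hilbert–Schmidt product.
* On `Re z = 0` the powers are contractions, so `X_i z` has Hilbert–Schmidt norm at most `1`, and
  `|G| ≤ 1` since the `M_j` are positive semidefinite and sum to `1` (`norm_interpFun_le_one`).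
* On `Re z = 1` the matrix `(V_i V_iᴴ) ^ (-z / 2) * V_i` is a contraction
  (`norm_expPow_mul_le_one`). Positivity of the partial transpose gives
  `|⟨X | N | Y⟩| ≤ tr N` for contractions `X`, `Y` (`norm_sesq_le_trace`); applied to
  `N = (σ_B ⊗ σ_C)^(1/2) M_j (σ_B ⊗ σ_C)^(1/2)`, whose partial transpose is again positive
  semidefinite, it bounds the `j`-th form by `tr ((σ_B ⊗ σ_C) M_j)`. As
  `∑ i, p i * exp (a i j) = 1`, summing over `i` and `j` yields `|G| ≤ 1`.

The three lines theorem now gives `|G x| ≤ 1 = G 0` for `0 ≤ x ≤ 1`, hence `Re (G' 0) ≤ 0`, which is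
the claim. Vanishing eigenvalues and probabilities have no logarithm; in `halfLog` and `logRatio`
they are replaced by `ε > 0`. This does not change `G' 0` and weakens the bound on `Re z = 1` to
`K = (1 + ε) * (1 + dB * ε) * (1 + dC * ε)`, so that `Re (G' 0) ≤ log K` (`core_bound`), and
`ε → 0` finishes the proof.
-/

open scoped BigOperators Classical ComplexOrder Matrix

noncomputable section

/-- von Neumann entropy in bits of a (Hermitian) matrix, via its eigenvalues. -/
def vnEntropy {n : Type*} [Fintype n] [DecidableEq n] (ρ : Matrix n n ℂ) : ℝ :=
  if h : ρ.IsHermitian then -∑ i, h.eigenvalues i * Real.logb 2 (h.eigenvalues i) else 0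

/-- A density matrix: positive semidefinite with unit trace. -/
def IsDensityMatrix {n : Type*} [Fintype n] [DecidableEq n] (ρ : Matrix n n ℂ) : Prop :=
  ρ.PosSemidef ∧ ρ.trace = 1

/-- Partial trace over the second (C) factor. -/
def ptraceC {dB dC : ℕ} (M : Matrix (Fin dB × Fin dC) (Fin dB × Fin dC) ℂ) :
    Matrix (Fin dB) (Fin dB) ℂ := fun i k => ∑ j, M (i, j) (k, j)

/-- Partial trace over the first (B) factor. -/
def ptraceB {dB dC : ℕ} (M : Matrix (Fin dB × Fin dC) (Fin dB × Fin dC) ℂ) :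
    Matrix (Fin dC) (Fin dC) ℂ := fun j l => ∑ i, M (i, j) (i, l)

/-- Partial transpose (on the second factor). -/
def ptranspose {dB dC : ℕ} (M : Matrix (Fin dB × Fin dC) (Fin dB × Fin dC) ℂ) :
    Matrix (Fin dB × Fin dC) (Fin dB × Fin dC) ℂ := fun p q => M (p.1, q.2) (q.1, p.2)

/-- The pure state (rank-one projector) associated to a vector. -/
def pureState {ι : Type*} (v : ι → ℂ) : Matrix ι ι ℂ := Matrix.vecMulVec v (star v)

/-- A unit vector. -/
def IsUnitVec {ι : Type*} [Fintype ι] (v : ι → ℂ) : Prop := ∑ x, Complex.normSq (v x) = 1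

/-- Entanglement entropy of a bipartite pure state. -/
def entg {dB dC : ℕ} (v : Fin dB × Fin dC → ℂ) : ℝ := vnEntropy (ptraceC (pureState v))

/-- The n-fold tensor power of an isometry `U : A → B ⊗ C`. -/
def tensorPow {dA dB dC : ℕ} (U : Matrix (Fin dB × Fin dC) (Fin dA) ℂ) (n : ℕ) :
    Matrix (Fin n → Fin dB × Fin dC) (Fin n → Fin dA) ℂ :=
  fun f g => ∏ k, U (f k) (g k)

/-- n-fold partial trace over the C factors. -/
def ptraceCn {dB dC n : ℕ}
    (M : Matrix (Fin n → Fin dB × Fin dC) (Fin n → Fin dB × Fin dC) ℂ) :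
    Matrix (Fin n → Fin dB) (Fin n → Fin dB) ℂ :=
  fun fB gB => ∑ fC : Fin n → Fin dC, M (fun k => (fB k, fC k)) (fun k => (gB k, fC k))

/-- n-fold partial transpose over the C factors. -/
def ptransposeN {dB dC n : ℕ}
    (M : Matrix (Fin n → Fin dB × Fin dC) (Fin n → Fin dB × Fin dC) ℂ) :
    Matrix (Fin n → Fin dB × Fin dC) (Fin n → Fin dB × Fin dC) ℂ :=
  fun f g => M (fun k => ((f k).1, (g k).2)) (fun k => ((g k).1, (f k).2))

/-- A POVM on the n-fold space implemented by one-way LOCC from C to B: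
Charlie measures `(M x)` on `C^n`, sends `x`, and Bob measures `(B x i)` on `B^n`. -/
def IsOneWayLOCC {dB dC n N : ℕ}
    (Np : Fin N → Matrix (Fin n → Fin dB × Fin dC) (Fin n → Fin dB × Fin dC) ℂ) : Prop :=
  ∃ (m : ℕ) (M : Fin m → Matrix (Fin n → Fin dC) (Fin n → Fin dC) ℂ)
    (B : Fin m → Fin N → Matrix (Fin n → Fin dB) (Fin n → Fin dB) ℂ),
    (∀ x, (M x).PosSemidef) ∧ (∑ x, M x) = 1 ∧
    (∀ x i, (B x i).PosSemidef) ∧ (∀ x, (∑ i, B x i) = 1) ∧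
    (∀ i f g, Np i f g =
      ∑ x, B x i (fun k => (f k).1) (fun k => (g k).1) * M x (fun k => (f k).2) (fun k => (g k).2))

/-- The rate R is achievable with one-way LOCC (C→B) decoding for the isometry U. -/
def AchievableOneWayCB {dA dB dC : ℕ} (U : Matrix (Fin dB × Fin dC) (Fin dA) ℂ) (R : ℝ) : Prop :=
  ∀ ε : ℝ, 0 < ε → ∃ n₀ : ℕ, ∀ n : ℕ, n₀ ≤ n →
    ∃ (N : ℕ) (φ : Fin N → (Fin n → Fin dB × Fin dC) → ℂ)
      (Np : Fin N → Matrix (Fin n → Fin dB × Fin dC) (Fin n → Fin dB × Fin dC) ℂ),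
      (2 : ℝ) ^ ((n : ℝ) * (R - ε)) ≤ (N : ℝ) ∧
      (∀ i, IsUnitVec (φ i)) ∧
      (∀ i, ∃ ψ, (tensorPow U n).mulVec ψ = φ i) ∧
      IsOneWayLOCC Np ∧
      (∀ i, 1 - ε ≤ (Matrix.trace (pureState (φ i) * Np i)).re)

/-- Base-2 Shannon entropy. -/
def shannonEntropy {ι : Type*} [Fintype ι] (q : ι → ℝ) : ℝ := -∑ x, q x * Real.logb 2 (q x)


open scoped Matrix.Norms.L2Operator

/-! ### Three lines theorem at an endpoint -/

/-- Entire functions that are bounded on the closed strip `0 ≤ Re z ≤ 1`. -/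
def StripBdd (f : ℂ → ℂ) : Prop :=
  Differentiable ℂ f ∧ ∃ C : ℝ, ∀ z : ℂ, 0 ≤ z.re → z.re ≤ 1 → ‖f z‖ ≤ C

namespace StripBdd

lemma const (c : ℂ) : StripBdd (fun _ => c) :=
  ⟨differentiable_const c, ‖c‖, fun _ _ _ => le_rfl⟩

lemma mul {f g : ℂ → ℂ} (hf : StripBdd f) (hg : StripBdd g) :
    StripBdd (fun z => f z * g z) := by
  obtain ⟨hf, C, hC⟩ := hf
  obtain ⟨hg, D, hD⟩ := hg
  refine ⟨hf.mul hg, C * D, fun z h0 h1 => ?_⟩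
  rw [norm_mul]
  exact mul_le_mul (hC z h0 h1) (hD z h0 h1) (norm_nonneg _)
    ((norm_nonneg _).trans (hC z h0 h1))

lemma sum {ι : Type*} (s : Finset ι) {f : ι → ℂ → ℂ} (hf : ∀ i ∈ s, StripBdd (f i)) :
    StripBdd (fun z => ∑ i ∈ s, f i z) := by
  refine ⟨Differentiable.fun_sum fun i hi => (hf i hi).1, ?_⟩
  choose! C hC using fun i hi => (hf i hi).2
  exact ⟨∑ i ∈ s, C i, fun z h0 h1 =>
    (norm_sum_le _ _).trans (Finset.sum_le_sum fun i hi => hC i hi z h0 h1)⟩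

lemma cexp (r : ℝ) : StripBdd (fun z => Complex.exp (z * r)) := by
  refine ⟨by fun_prop, Real.exp |r|, fun z h0 h1 => ?_⟩
  rw [Complex.norm_exp, Real.exp_le_exp, Complex.re_mul_ofReal]
  calc z.re * r ≤ z.re * |r| := mul_le_mul_of_nonneg_left (le_abs_self r) h0
    _ ≤ 1 * |r| := mul_le_mul_of_nonneg_right h1 (abs_nonneg r)
    _ = |r| := one_mul _

lemma conj_conj {f : ℂ → ℂ} (hf : StripBdd f) :
    StripBdd (fun z => star (f (star z))) := by
  obtain ⟨hf, C, hC⟩ := hf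
  refine ⟨fun z => ?_, C, fun z h0 h1 => ?_⟩
  · have := (hf (star z)).hasDerivAt.conj_conj
    simp only [starRingEnd_apply, star_star] at this
    exact this.differentiableAt
  · rw [norm_star]
    exact hC _ (by simpa using h0) (by simpa using h1)

lemma matrix_mul {a b c : Type*} [Fintype b] {A : ℂ → Matrix a b ℂ} {B : ℂ → Matrix b c ℂ}
    (hA : ∀ i j, StripBdd (fun z => A z i j)) (hB : ∀ i j, StripBdd (fun z => B z i j))
    (i : a) (j : c) : StripBdd (fun z => (A z * B z) i j) := by
  simp only [Matrix.mul_apply]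
  exact sum _ fun k _ => (hA i k).mul (hB k j)

end StripBdd

/-- An entire function bounded by `1` on `Re z = 0` and by `K` on `Re z = 1` is bounded by `K ^ x` at
`x ∈ [0, 1]`; comparing with its value `1` at `0` gives a bound on the derivative there. -/
lemma deriv_le_log_of_strip {G : ℂ → ℂ} (hG : StripBdd G) {K : ℝ} (hK : 0 < K)
    (h0 : ∀ z : ℂ, z.re = 0 → ‖G z‖ ≤ 1) (h1 : ∀ z : ℂ, z.re = 1 → ‖G z‖ ≤ K)
    (hG0 : G 0 = 1) {G' : ℂ} (hd : HasDerivAt G G' 0) : G'.re ≤ Real.log K := by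
  have key : ∀ x ∈ Set.Icc (0 : ℝ) 1, (G x).re ≤ K ^ x := by
    intro x hx
    have := Complex.HadamardThreeLines.norm_le_interp_of_mem_verticalClosedStrip₀₁' G
      (z := (x : ℂ)) (a := 1) (b := K)
      (by simpa [Complex.HadamardThreeLines.verticalClosedStrip] using hx)
      hG.1.diffContOnCl ?_ (fun z hz => h0 z hz) (fun z hz => h1 z hz)
    · simp only [Complex.ofReal_re, Real.one_rpow, one_mul] at this
      exact (Complex.re_le_norm _).trans this
    · obtain ⟨C, hC⟩ := hG.2
      refine ⟨C, ?_⟩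
      rintro _ ⟨z, hz, rfl⟩
      exact hC z hz.1 hz.2
  have hd1 : HasDerivAt (fun x : ℝ => (G x).re) G'.re 0 :=
    HasDerivAt.real_of_complex (by simpa using hd)
  have hd2 : HasDerivAt (fun x : ℝ => K ^ x) (Real.log K) 0 := by
    have := Real.hasStrictDerivAt_const_rpow hK 0
    simpa using this.hasDerivAt
  have hd3 := hd2.sub hd1
  have hslope := hd3.hasDerivWithinAt (s := Set.Ioi 0)
  rw [hasDerivWithinAt_iff_tendsto_slope' (by simp)] at hslope
  have : 0 ≤ Real.log K - G'.re := by
    refine ge_of_tendsto hslope ?_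
    filter_upwards [Ioo_mem_nhdsGT (show (0 : ℝ) < 1 by norm_num)] with x hx
    have hk := key x ⟨hx.1.le, hx.2.le⟩
    simp only [slope, vsub_eq_sub, sub_zero, smul_eq_mul, Pi.sub_apply]
    rw [Real.rpow_zero, Complex.ofReal_zero, hG0]
    simp only [Complex.one_re, sub_self, sub_zero]
    exact mul_nonneg (inv_nonneg.2 hx.1.le) (sub_nonneg.2 hk)
  linarith

/-! ### Complex powers of positive matrices -/

/-- The matrix `U * exp (z * diag b) * Uᴴ`, that is the complex power `H ^ z` of the positive matrix
`H = U * exp (diag b) * Uᴴ` when `U` is unitary. Working with the logarithms `b` of the eigenvalues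
avoids branch choices. -/
def expPow {n : Type*} [Fintype n] [DecidableEq n] (U : Matrix n n ℂ) (b : n → ℝ) (z : ℂ) :
    Matrix n n ℂ :=
  U * Matrix.diagonal (fun k => Complex.exp (z * b k)) * Uᴴ

section expPow

variable {n : Type*} [Fintype n] [DecidableEq n] {U : Matrix n n ℂ} (b : n → ℝ)

lemma expPow_zero (hU : U * Uᴴ = 1) : expPow U b 0 = 1 := by
  simp [expPow, hU]

lemma expPow_add (hU : Uᴴ * U = 1) (z w : ℂ) :
    expPow U b (z + w) = expPow U b z * expPow U b w := by
  have : expPow U b z * expPow U b w =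
      U * (Matrix.diagonal (fun k => Complex.exp (z * b k)) * (Uᴴ * U) *
        Matrix.diagonal (fun k => Complex.exp (w * b k))) * Uᴴ := by
    simp only [expPow, Matrix.mul_assoc]
  rw [this, hU, Matrix.mul_one, Matrix.diagonal_mul_diagonal]
  simp only [expPow, add_mul, Complex.exp_add]

lemma norm_le_one_of_unitary (hU : Uᴴ * U = 1) : ‖U‖ ≤ 1 := by
  have h := Matrix.l2_opNorm_conjTranspose_mul_self U
  have h1 : ‖(1 : Matrix n n ℂ)‖ ≤ 1 := by
    rw [← Matrix.diagonal_one, Matrix.l2_opNorm_diagonal]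
    exact (pi_norm_le_iff_of_nonneg zero_le_one).2 fun i => by simp
  rw [hU] at h
  nlinarith [norm_nonneg U]

lemma norm_mul_le_one {l m n : Type*} [Fintype l] [Fintype m] [Fintype n] [DecidableEq m]
    [DecidableEq n]
    {A : Matrix l m ℂ} {B : Matrix m n ℂ} (hA : ‖A‖ ≤ 1) (hB : ‖B‖ ≤ 1) : ‖A * B‖ ≤ 1 :=
  (Matrix.l2_opNorm_mul A B).trans (mul_le_one₀ hA (norm_nonneg _) hB)

lemma norm_expPow_le_one (hU : Uᴴ * U = 1) {z : ℂ} (hz : z.re = 0) : ‖expPow U b z‖ ≤ 1 := by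
  refine norm_mul_le_one (norm_mul_le_one (norm_le_one_of_unitary hU) ?_) ?_
  · rw [Matrix.l2_opNorm_diagonal]
    refine (pi_norm_le_iff_of_nonneg zero_le_one).2 fun i => ?_
    rw [Complex.norm_exp, Complex.re_mul_ofReal, hz]
    simp
  · rw [Matrix.l2_opNorm_conjTranspose]
    exact norm_le_one_of_unitary hU

lemma stripBdd_expPow (i j : n) : StripBdd (fun z => expPow U b z i j) := by
  refine StripBdd.matrix_mul (A := fun z => U * Matrix.diagonal (fun k => Complex.exp (z * b k)))
    (B := fun _ => Uᴴ) (StripBdd.matrix_mul (fun i j => StripBdd.const _) ?_)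
    (fun i j => StripBdd.const _) i j
  intro i j
  by_cases h : i = j
  · subst h
    simpa using StripBdd.cexp (b i)
  · simpa [h] using StripBdd.const 0

/-- The trace of `H ^ 2`, where `H = U * exp (diag b) * Uᴴ`. -/
lemma trace_expPow_mul_conjTranspose (hU : Uᴴ * U = 1) :
    (expPow U b 1 * (expPow U b 1)ᴴ).trace = ((∑ k, Real.exp (2 * b k) : ℝ) : ℂ) := by
  have h : (expPow U b 1)ᴴ = expPow U b 1 := by
    simp only [expPow, Matrix.conjTranspose_mul, Matrix.conjTranspose_conjTranspose,
      Matrix.diagonal_conjTranspose, Matrix.mul_assoc, one_mul]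
    congr 3
    ext k
    simp [← Complex.exp_conj]
  rw [h, ← expPow_add b hU, expPow, Matrix.trace_mul_comm, ← Matrix.mul_assoc, hU,
    Matrix.one_mul, Matrix.trace_diagonal]
  push_cast
  exact Finset.sum_congr rfl fun k _ => by norm_num

lemma hasDerivAt_matrix_mul {a b c : Type*} [Fintype b] {A : ℂ → Matrix a b ℂ}
    {B : ℂ → Matrix b c ℂ} {A' : Matrix a b ℂ} {B' : Matrix b c ℂ} {z : ℂ}
    (hA : ∀ i j, HasDerivAt (fun z => A z i j) (A' i j) z)
    (hB : ∀ i j, HasDerivAt (fun z => B z i j) (B' i j) z) (i : a) (j : c) :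
    HasDerivAt (fun z => (A z * B z) i j) ((A' * B z + A z * B') i j) z := by
  simp only [Matrix.mul_apply, Matrix.add_apply, ← Finset.sum_add_distrib]
  exact HasDerivAt.fun_sum fun k _ => (hA i k).mul (hB k j)

lemma hasDerivAt_expPow (i j : n) :
    HasDerivAt (fun z => expPow U b z i j)
      ((U * Matrix.diagonal (fun k => (b k : ℂ)) * Uᴴ) i j) 0 := by
  have hD : ∀ i j : n, HasDerivAt
      (fun z => Matrix.diagonal (fun k => Complex.exp (z * b k)) i j)
      (Matrix.diagonal (fun k => (b k : ℂ)) i j) 0 := by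
    intro i j
    by_cases h : i = j
    · subst h
      simp only [Matrix.diagonal_apply_eq]
      have := ((hasDerivAt_id (0 : ℂ)).mul_const (b i : ℂ)).cexp
      simpa using this
    · simpa [h] using hasDerivAt_const (0 : ℂ) (0 : ℂ)
  have hc : ∀ (A : Matrix n n ℂ) (i j : n),
      HasDerivAt (fun _ : ℂ => A i j) ((0 : Matrix n n ℂ) i j) 0 :=
    fun A i j => hasDerivAt_const _ _
  have h1 := hasDerivAt_matrix_mul (hasDerivAt_matrix_mul (hc U) hD) (hc Uᴴ) i j
  simpa [expPow] using h1

end expPow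

/-! ### Sesquilinear forms on coefficient matrices -/

section sesq

variable {dB dC : ℕ}

/-- The sesquilinear form `⟨X | N | Y⟩`, where the matrices `X`, `Y` are read as vectors of
`ℂ^dB ⊗ ℂ^dC`. -/
def sesq (N : Matrix (Fin dB × Fin dC) (Fin dB × Fin dC) ℂ)
    (X Y : Matrix (Fin dB) (Fin dC) ℂ) : ℂ :=
  ∑ p, ∑ q, star (X p.1 p.2) * N p q * Y q.1 q.2

/-- The squared Hilbert–Schmidt (Frobenius) norm. -/
def frob {a b : Type*} [Fintype a] [Fintype b] (X : Matrix a b ℂ) : ℝ := ∑ i, ∑ j, ‖X i j‖ ^ 2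

lemma frob_nonneg {a b : Type*} [Fintype a] [Fintype b] (X : Matrix a b ℂ) : 0 ≤ frob X :=
  Finset.sum_nonneg fun _ _ => Finset.sum_nonneg fun _ _ => sq_nonneg _

lemma frob_transpose {a b : Type*} [Fintype a] [Fintype b] (X : Matrix a b ℂ) :
    frob Xᵀ = frob X := Finset.sum_comm

lemma frob_map_star {a b : Type*} [Fintype a] [Fintype b] (X : Matrix a b ℂ) :
    frob (X.map star) = frob X := by simp [frob]

lemma frob_conjTranspose {a b : Type*} [Fintype a] [Fintype b] (X : Matrix a b ℂ) :
    frob Xᴴ = frob X := (frob_map_star Xᵀ).trans (frob_transpose X)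

lemma frob_mul_le {a b c : Type*} [Fintype a] [Fintype b] [Fintype c] [DecidableEq b]
    {A : Matrix a b ℂ} (hA : ‖A‖ ≤ 1) (X : Matrix b c ℂ) : frob (A * X) ≤ frob X := by
  rw [frob, frob, Finset.sum_comm, Finset.sum_comm (f := fun i j => ‖X i j‖ ^ 2)]
  refine Finset.sum_le_sum fun j _ => ?_
  have h := Matrix.l2_opNorm_mulVec A (WithLp.toLp 2 (fun i => X i j))
  have h2 := h.trans (mul_le_of_le_one_left (norm_nonneg _) hA)
  have h3 := pow_le_pow_left₀ (norm_nonneg _) h2 2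
  rw [EuclideanSpace.norm_sq_eq, EuclideanSpace.norm_sq_eq] at h3
  exact h3

lemma frob_mul_le' {a b c : Type*} [Fintype a] [Fintype b] [Fintype c] [DecidableEq b]
    [DecidableEq c]
    {A : Matrix b c ℂ} (hA : ‖A‖ ≤ 1) (X : Matrix a b ℂ) : frob (X * A) ≤ frob X := by
  rw [← frob_conjTranspose, Matrix.conjTranspose_mul, ← frob_conjTranspose X]
  exact frob_mul_le (by rwa [Matrix.l2_opNorm_conjTranspose]) _

lemma norm_trace_conjTranspose_mul_le {a b : Type*} [Fintype a] [Fintype b]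
    (X Y : Matrix a b ℂ) : ‖(Xᴴ * Y).trace‖ ≤ (frob X + frob Y) / 2 := by
  simp only [Matrix.trace, Matrix.diag, Matrix.mul_apply, Matrix.conjTranspose_apply]
  rw [frob, frob, Finset.sum_comm (f := fun i j => ‖X i j‖ ^ 2),
    Finset.sum_comm (f := fun i j => ‖Y i j‖ ^ 2), ← Finset.sum_add_distrib, Finset.sum_div]
  refine (norm_sum_le _ _).trans (Finset.sum_le_sum fun j _ => ?_)
  rw [← Finset.sum_add_distrib, Finset.sum_div]
  refine (norm_sum_le _ _).trans (Finset.sum_le_sum fun i _ => ?_)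
  rw [norm_mul, norm_star]
  nlinarith [sq_nonneg (‖X i j‖ - ‖Y i j‖)]

lemma PosSemidef.exists_factor {n : Type*} [Fintype n] [DecidableEq n] {N : Matrix n n ℂ}
    (hN : N.PosSemidef) : ∃ B : Matrix n n ℂ, N = Bᴴ * B := by
  open scoped MatrixOrder in
  obtain ⟨B, hB⟩ := CStarAlgebra.nonneg_iff_eq_star_mul_self.mp hN.nonneg
  exact ⟨B, hB⟩

lemma sesq_factor (B : Matrix (Fin dB × Fin dC) (Fin dB × Fin dC) ℂ)
    (X Y : Matrix (Fin dB) (Fin dC) ℂ) :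
    sesq (Bᴴ * B) X Y = ∑ s, star (∑ q, B s q * X q.1 q.2) * ∑ q, B s q * Y q.1 q.2 := by
  simp only [sesq, Matrix.mul_apply, Matrix.conjTranspose_apply, star_sum, star_mul',
    Finset.mul_sum, Finset.sum_mul]
  rw [Finset.sum_congr rfl fun p _ => Finset.sum_comm, Finset.sum_comm]
  refine Finset.sum_congr rfl fun s _ => ?_
  rw [Finset.sum_comm]
  refine Finset.sum_congr rfl fun p _ => Finset.sum_congr rfl fun q _ => by ring

lemma sesq_self {N : Matrix (Fin dB × Fin dC) (Fin dB × Fin dC) ℂ} (hN : N.PosSemidef)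
    (X : Matrix (Fin dB) (Fin dC) ℂ) :
    sesq N X X = ((sesq N X X).re : ℂ) ∧ 0 ≤ (sesq N X X).re := by
  obtain ⟨B, rfl⟩ := PosSemidef.exists_factor hN
  have : sesq (Bᴴ * B) X X = ((∑ s, ‖∑ q, B s q * X q.1 q.2‖ ^ 2 : ℝ) : ℂ) := by
    rw [sesq_factor]
    push_cast
    exact Finset.sum_congr rfl fun s _ => Complex.conj_mul' _
  rw [this, Complex.ofReal_re]
  exact ⟨rfl, Finset.sum_nonneg fun _ _ => sq_nonneg _⟩

/-- Cauchy–Schwarz for the form of a positive semidefinite matrix, in arithmetic-mean form. -/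
lemma norm_sesq_le {N : Matrix (Fin dB × Fin dC) (Fin dB × Fin dC) ℂ} (hN : N.PosSemidef)
    (X Y : Matrix (Fin dB) (Fin dC) ℂ) :
    ‖sesq N X Y‖ ≤ ((sesq N X X).re + (sesq N Y Y).re) / 2 := by
  obtain ⟨B, rfl⟩ := PosSemidef.exists_factor hN
  have h : ∀ X : Matrix (Fin dB) (Fin dC) ℂ,
      (sesq (Bᴴ * B) X X).re = ∑ s, ‖∑ q, B s q * X q.1 q.2‖ ^ 2 := by
    intro X
    have : sesq (Bᴴ * B) X X = ((∑ s, ‖∑ q, B s q * X q.1 q.2‖ ^ 2 : ℝ) : ℂ) := by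
      rw [sesq_factor]
      push_cast
      exact Finset.sum_congr rfl fun s _ => Complex.conj_mul' _
    rw [this, Complex.ofReal_re]
  rw [h, h, sesq_factor, ← Finset.sum_add_distrib, Finset.sum_div]
  refine (norm_sum_le _ _).trans (Finset.sum_le_sum fun s _ => ?_)
  rw [norm_mul, norm_star]
  nlinarith [sq_nonneg (‖∑ q, B s q * X q.1 q.2‖ - ‖∑ q, B s q * Y q.1 q.2‖)]

/-- Here the PPT hypothesis enters. If `N^Γ = ∑ s, |r_s⟩⟨r_s|` (up to conjugation), then `⟨X | N | Y⟩`
is a sum over `s` of Hilbert–Schmidt products of `Xᵀ * r_s` and `r_sᵀ * Y`, and multiplication by a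
contraction does not increase the Hilbert–Schmidt norm of `r_s`. Without positivity of `N^Γ` this
fails: for the projector on a maximally entangled vector, `dB = dC` and `X = Y = 1`, the form is
`dB` and the trace is `1`. -/
lemma norm_sesq_le_trace {N : Matrix (Fin dB × Fin dC) (Fin dB × Fin dC) ℂ}
    (hN : (ptranspose N).PosSemidef) {X Y : Matrix (Fin dB) (Fin dC) ℂ}
    (hX : ‖X‖ ≤ 1) (hY : ‖Y‖ ≤ 1) : ‖sesq N X Y‖ ≤ N.trace.re := by
  obtain ⟨B, hB⟩ := PosSemidef.exists_factor hN
  let r : Fin dB × Fin dC → Matrix (Fin dB) (Fin dC) ℂ := fun s => Matrix.of fun b c => B s (b, c)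
  have hNe : ∀ p q, N p q = ∑ s, star (r s p.1 q.2) * r s q.1 p.2 := by
    intro p q
    have := congrFun (congrFun hB (p.1, q.2)) (q.1, p.2)
    simpa [ptranspose, Matrix.mul_apply, r] using this
  -- In terms of the matrices `r s`, the partially transposed form becomes a trace in which
  -- `X` and `Y` act by ordinary matrix multiplication.
  have h1 : sesq N X Y = ∑ s, ((Xᵀ * r s)ᴴ * ((r s)ᵀ * Y)).trace := by
    simp only [sesq, hNe, Finset.mul_sum, Finset.sum_mul]
    rw [Finset.sum_congr rfl fun p _ => Finset.sum_comm, Finset.sum_comm]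
    refine Finset.sum_congr rfl fun s _ => ?_
    simp only [Matrix.trace, Matrix.diag, Matrix.mul_apply, Matrix.conjTranspose_apply,
      Matrix.transpose_apply, star_sum, star_mul', Finset.mul_sum, Finset.sum_mul]
    rw [Fintype.sum_prod_type_right]
    conv_rhs => rw [Finset.sum_comm]
    refine Finset.sum_congr rfl fun c _ => ?_
    simp only [Fintype.sum_prod_type_right]
    rw [Finset.sum_comm]
    refine Finset.sum_congr rfl fun c' _ => ?_
    rw [Finset.sum_comm]
    refine Finset.sum_congr rfl fun b _ => Finset.sum_congr rfl fun b' _ => by ring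
  have h2 : N.trace.re = ∑ s, frob (r s) := by
    simp only [Matrix.trace, Matrix.diag, hNe]
    rw [Finset.sum_comm, Complex.re_sum]
    refine Finset.sum_congr rfl fun s _ => ?_
    rw [frob, ← Fintype.sum_prod_type' (f := fun b c => ‖r s b c‖ ^ 2), Complex.re_sum]
    refine Finset.sum_congr rfl fun x _ => ?_
    have := Complex.conj_mul' (r s x.1 x.2)
    rw [starRingEnd_apply] at this
    rw [this]
    norm_cast
  rw [h1, h2]
  refine (norm_sum_le _ _).trans (Finset.sum_le_sum fun s _ => ?_)
  have hx : frob (Xᵀ * r s) ≤ frob (r s) := by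
    rw [← frob_transpose, Matrix.transpose_mul, Matrix.transpose_transpose, ← frob_transpose (r s)]
    exact frob_mul_le' hX _
  have hy : frob ((r s)ᵀ * Y) ≤ frob (r s) := by
    rw [← frob_transpose (r s)]
    exact frob_mul_le' hY _
  linarith [norm_trace_conjTranspose_mul_le (Xᵀ * r s) ((r s)ᵀ * Y)]

end sesq

section core

variable {dB dC : ℕ}

open scoped Kronecker

lemma sesq_eq_dotProduct (N : Matrix (Fin dB × Fin dC) (Fin dB × Fin dC) ℂ)
    (X Y : Matrix (Fin dB) (Fin dC) ℂ) :
    sesq N X Y = star (fun p : Fin dB × Fin dC => X p.1 p.2) ⬝ᵥ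
      (N *ᵥ fun p : Fin dB × Fin dC => Y p.1 p.2) := by
  simp only [sesq, dotProduct, Matrix.mulVec, Finset.mul_sum, Pi.star_apply, mul_assoc]

/-- The action of `A ⊗ Dᵀ` on the vector with coefficient matrix `X`. -/
lemma kronecker_mulVec (A : Matrix (Fin dB) (Fin dB) ℂ) (D : Matrix (Fin dC) (Fin dC) ℂ)
    (X : Matrix (Fin dB) (Fin dC) ℂ) :
    ((A ⊗ₖ Dᵀ) *ᵥ fun p : Fin dB × Fin dC => X p.1 p.2) =
      fun p : Fin dB × Fin dC => (A * X * D) p.1 p.2 := by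
  ext p
  simp only [Matrix.mulVec, dotProduct, Matrix.kroneckerMap_apply, Matrix.transpose_apply,
    Matrix.mul_apply, Finset.sum_mul, Fintype.sum_prod_type_right]
  exact Finset.sum_congr rfl fun c _ => Finset.sum_congr rfl fun b _ => by ring

lemma sesq_sandwich (N : Matrix (Fin dB × Fin dC) (Fin dB × Fin dC) ℂ)
    (A : Matrix (Fin dB) (Fin dB) ℂ) (D : Matrix (Fin dC) (Fin dC) ℂ)
    (X Y : Matrix (Fin dB) (Fin dC) ℂ) :
    sesq N (A * X * D) (A * Y * D) = sesq ((A ⊗ₖ Dᵀ)ᴴ * N * (A ⊗ₖ Dᵀ)) X Y := by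
  rw [sesq_eq_dotProduct, sesq_eq_dotProduct, ← kronecker_mulVec, ← kronecker_mulVec,
    Matrix.star_mulVec, ← Matrix.dotProduct_mulVec, Matrix.mulVec_mulVec, Matrix.mulVec_mulVec,
    Matrix.mul_assoc]

/-- Partial transposition turns the conjugation by `A ⊗ Dᵀ` into the conjugation by `A ⊗ Dᴴ`; in
particular local conjugations preserve positivity of the partial transpose. -/
lemma ptranspose_sandwich (N : Matrix (Fin dB × Fin dC) (Fin dB × Fin dC) ℂ)
    (A : Matrix (Fin dB) (Fin dB) ℂ) (D : Matrix (Fin dC) (Fin dC) ℂ) :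
    ptranspose ((A ⊗ₖ Dᵀ)ᴴ * N * (A ⊗ₖ Dᵀ)) =
      (A ⊗ₖ Dᴴ)ᴴ * ptranspose N * (A ⊗ₖ Dᴴ) := by
  ext p q
  simp only [ptranspose, Matrix.mul_apply, Matrix.conjTranspose_apply, Matrix.kroneckerMap_apply,
    Matrix.transpose_apply, Finset.sum_mul, Fintype.sum_prod_type, star_mul', star_star]
  refine Finset.sum_congr rfl fun b _ => ?_
  rw [Finset.sum_comm]
  conv_rhs => rw [Finset.sum_comm]
  refine Finset.sum_congr rfl fun b' _ => ?_
  rw [Finset.sum_comm]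
  refine Finset.sum_congr rfl fun c _ => Finset.sum_congr rfl fun c' _ => by ring

/-- `norm_sesq_le_trace` after a local conjugation. -/
lemma norm_sesq_sandwich_le {N : Matrix (Fin dB × Fin dC) (Fin dB × Fin dC) ℂ}
    (hN : (ptranspose N).PosSemidef)
    (A : Matrix (Fin dB) (Fin dB) ℂ) (D : Matrix (Fin dC) (Fin dC) ℂ)
    {X Y : Matrix (Fin dB) (Fin dC) ℂ} (hX : ‖X‖ ≤ 1) (hY : ‖Y‖ ≤ 1) :
    ‖sesq N (A * X * D) (A * Y * D)‖ ≤ ((A ⊗ₖ Dᵀ)ᴴ * N * (A ⊗ₖ Dᵀ)).trace.re := by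
  rw [sesq_sandwich]
  refine norm_sesq_le_trace ?_ hX hY
  rw [ptranspose_sandwich]
  exact hN.conjTranspose_mul_mul_same _

lemma sum_sesq {J : ℕ} (M : Fin J → Matrix (Fin dB × Fin dC) (Fin dB × Fin dC) ℂ)
    (hMsum : ∑ j, M j = 1) (X Y : Matrix (Fin dB) (Fin dC) ℂ) :
    ∑ j, sesq (M j) X Y = (Xᴴ * Y).trace := by
  have : ∑ j, sesq (M j) X Y = sesq (∑ j, M j) X Y := by
    simp only [sesq_eq_dotProduct, Matrix.sum_mulVec, dotProduct_sum]
  rw [this, hMsum, sesq_eq_dotProduct, Matrix.one_mulVec]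
  simp only [dotProduct, Matrix.trace, Matrix.diag, Matrix.mul_apply, Matrix.conjTranspose_apply,
    Fintype.sum_prod_type_right, Pi.star_apply]

lemma trace_conjTranspose_mul_self_re {a b : Type*} [Fintype a] [Fintype b] (X : Matrix a b ℂ) :
    (Xᴴ * X).trace.re = frob X := by
  simp only [Matrix.trace, Matrix.diag, Matrix.mul_apply, Matrix.conjTranspose_apply,
    Complex.re_sum]
  rw [frob, Finset.sum_comm]
  refine Finset.sum_congr rfl fun i _ => Finset.sum_congr rfl fun j _ => ?_
  have := Complex.conj_mul' (X i j)
  rw [starRingEnd_apply] at this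
  rw [this]
  norm_cast

/-! ### The analytic family interpolating between the two sides -/

/-- The analytic family `X z = exp (z β) * exp (z l) * V * exp (z γ)`, where the diagonal exponents
`β`, `l`, `γ` are taken in the bases `U`, `W`, `T` respectively; `X 0 = V` for unitary bases. -/
def interp (U : Matrix (Fin dB) (Fin dB) ℂ) (β : Fin dB → ℝ)
    (W : Matrix (Fin dB) (Fin dB) ℂ) (l : Fin dB → ℝ)
    (T : Matrix (Fin dC) (Fin dC) ℂ) (γ : Fin dC → ℝ)
    (V : Matrix (Fin dB) (Fin dC) ℂ) (z : ℂ) : Matrix (Fin dB) (Fin dC) ℂ :=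
  expPow U β z * (expPow W l z * V) * expPow T γ z

lemma stripBdd_interp (U : Matrix (Fin dB) (Fin dB) ℂ) (β : Fin dB → ℝ)
    (W : Matrix (Fin dB) (Fin dB) ℂ) (l : Fin dB → ℝ)
    (T : Matrix (Fin dC) (Fin dC) ℂ) (γ : Fin dC → ℝ)
    (V : Matrix (Fin dB) (Fin dC) ℂ) (b : Fin dB) (c : Fin dC) :
    StripBdd (fun z => interp U β W l T γ V z b c) :=
  StripBdd.matrix_mul (StripBdd.matrix_mul (stripBdd_expPow β) (StripBdd.matrix_mul
    (B := fun _ => V) (stripBdd_expPow l) fun _ _ => StripBdd.const _)) (stripBdd_expPow γ) b c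

/-- The matrix with real eigenvalues `b` in the orthonormal basis given by the columns of `U`. -/
def herm {n : Type*} [Fintype n] [DecidableEq n] (U : Matrix n n ℂ) (b : n → ℝ) : Matrix n n ℂ :=
  U * Matrix.diagonal (fun k => (b k : ℂ)) * Uᴴ

lemma hasDerivAt_interp {U : Matrix (Fin dB) (Fin dB) ℂ} (β : Fin dB → ℝ)
    {W : Matrix (Fin dB) (Fin dB) ℂ} (l : Fin dB → ℝ)
    {T : Matrix (Fin dC) (Fin dC) ℂ} (γ : Fin dC → ℝ)
    (V : Matrix (Fin dB) (Fin dC) ℂ)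
    (hU : U * Uᴴ = 1) (hW : W * Wᴴ = 1) (hT : T * Tᴴ = 1) (b : Fin dB) (c : Fin dC) :
    HasDerivAt (fun z => interp U β W l T γ V z b c)
      ((herm U β * V + herm W l * V + V * herm T γ) b c) 0 := by
  have h := hasDerivAt_matrix_mul (hasDerivAt_matrix_mul (hasDerivAt_expPow (U := U) β)
    (hasDerivAt_matrix_mul (B := fun _ => V) (B' := 0) (hasDerivAt_expPow (U := W) l)
      fun _ _ => hasDerivAt_const _ _)) (hasDerivAt_expPow (U := T) γ) b c
  simpa [expPow_zero _ hU, expPow_zero _ hW, expPow_zero _ hT, interp, herm] using h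

end core

section core2

variable {dB dC J : ℕ} {U W : Matrix (Fin dB) (Fin dB) ℂ} {T : Matrix (Fin dC) (Fin dC) ℂ}
  {β l : Fin dB → ℝ} {γ : Fin dC → ℝ} {V : Matrix (Fin dB) (Fin dC) ℂ}
  {M : Fin J → Matrix (Fin dB × Fin dC) (Fin dB × Fin dC) ℂ} {a : Fin J → ℝ}

open scoped Kronecker

/-- The contribution of one signal state to the function on the strip. The argument `star z` in the
conjugate-linear slot makes it holomorphic. -/
def interpFun (M : Fin J → Matrix (Fin dB × Fin dC) (Fin dB × Fin dC) ℂ) (a : Fin J → ℝ)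
    (X : ℂ → Matrix (Fin dB) (Fin dC) ℂ) (z : ℂ) : ℂ :=
  ∑ j, Complex.exp (z * a j) * sesq (M j) (X (star z)) (X z)

lemma stripBdd_interpFun {X : ℂ → Matrix (Fin dB) (Fin dC) ℂ}
    (hX : ∀ b c, StripBdd (fun z => X z b c)) : StripBdd (interpFun M a X) :=
  StripBdd.sum _ fun _ _ => (StripBdd.cexp _).mul <|
    StripBdd.sum _ fun p _ => StripBdd.sum _ fun q _ =>
      ((hX p.1 p.2).conj_conj.mul (StripBdd.const _)).mul (hX q.1 q.2)

lemma interpFun_zero (hMsum : ∑ j, M j = 1) {X : ℂ → Matrix (Fin dB) (Fin dC) ℂ}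
    (hX0 : X 0 = V) (hV : frob V = 1) (hM : ∀ j, (M j).PosSemidef) : interpFun M a X 0 = 1 := by
  have h : interpFun M a X 0 = (((∑ j, sesq (M j) V V).re : ℝ) : ℂ) := by
    simp only [interpFun, zero_mul, Complex.exp_zero, one_mul, star_zero, hX0, Complex.re_sum]
    push_cast
    exact Finset.sum_congr rfl fun j _ => (sesq_self (hM j) V).1
  rw [h, sum_sesq M hMsum, trace_conjTranspose_mul_self_re, hV, Complex.ofReal_one]

/-- By `∑ j, M j = 1` the derivative of the form collapses to traces against the derivative of `X`. -/
lemma hasDerivAt_interpFun (hMsum : ∑ j, M j = 1) {X : ℂ → Matrix (Fin dB) (Fin dC) ℂ}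
    (hX0 : X 0 = V) {X' : Matrix (Fin dB) (Fin dC) ℂ}
    (hX : ∀ b c, HasDerivAt (fun z => X z b c) (X' b c) 0) :
    HasDerivAt (interpFun M a X)
      (∑ j, (a j : ℂ) * sesq (M j) V V + (X'ᴴ * V).trace + (Vᴴ * X').trace) 0 := by
  have hs : ∀ j, HasDerivAt (fun z => sesq (M j) (X (star z)) (X z))
      (sesq (M j) X' V + sesq (M j) V X') 0 := by
    intro j
    simp only [sesq, ← Finset.sum_add_distrib]
    refine HasDerivAt.fun_sum fun p _ => HasDerivAt.fun_sum fun q _ => ?_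
    have h1 : HasDerivAt (fun z => star (X (star z) p.1 p.2)) (star (X' p.1 p.2)) 0 := by
      have hx : HasDerivAt (fun z => X z p.1 p.2) (X' p.1 p.2) (star (0 : ℂ)) := by
        simpa using hX p.1 p.2
      simpa [Function.comp_def] using hx.conj_conj
    have := (h1.mul_const (M j p q)).fun_mul (hX q.1 q.2)
    simpa [hX0] using this
  have he : ∀ j, HasDerivAt (fun z : ℂ => Complex.exp (z * a j)) (a j) 0 := by
    intro j
    have := ((hasDerivAt_id (0 : ℂ)).mul_const (a j : ℂ)).cexp
    simpa using this
  have h := HasDerivAt.fun_sum (u := Finset.univ) fun j _ => (he j).fun_mul (hs j)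
  refine h.congr_deriv ?_
  simp only [star_zero, hX0, zero_mul, Complex.exp_zero, one_mul, Finset.sum_add_distrib,
    sum_sesq M hMsum]
  ring

/-- On the imaginary axis the phases `exp (z * a j)` drop out, and the POVM condition bounds the
function by the Hilbert–Schmidt norms. -/
lemma norm_interpFun_le_one (hM : ∀ j, (M j).PosSemidef) (hMsum : ∑ j, M j = 1)
    {X : ℂ → Matrix (Fin dB) (Fin dC) ℂ} {z : ℂ} (hz : z.re = 0)
    (hX : ∀ w : ℂ, w.re = 0 → frob (X w) ≤ 1) : ‖interpFun M a X z‖ ≤ 1 := by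
  have h : ∀ Y : Matrix (Fin dB) (Fin dC) ℂ, ∑ j, (sesq (M j) Y Y).re = frob Y := fun Y => by
    rw [← Complex.re_sum, sum_sesq M hMsum, trace_conjTranspose_mul_self_re]
  have h1 : ‖interpFun M a X z‖ ≤
      ∑ j, ((sesq (M j) (X (star z)) (X (star z))).re + (sesq (M j) (X z) (X z)).re) / 2 := by
    refine (norm_sum_le _ _).trans (Finset.sum_le_sum fun j _ => ?_)
    rw [norm_mul, Complex.norm_exp, Complex.re_mul_ofReal, hz, zero_mul, Real.exp_zero, one_mul]
    exact norm_sesq_le (hM j) _ _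
  rw [← Finset.sum_div, Finset.sum_add_distrib, h, h] at h1
  linarith [hX z hz, hX (star z) (by simpa using hz)]

lemma frob_interp_le (hU : Uᴴ * U = 1) (hW : Wᴴ * W = 1) (hT : Tᴴ * T = 1) {w : ℂ}
    (hw : w.re = 0) : frob (interp U β W l T γ V w) ≤ frob V :=
  (frob_mul_le' (norm_expPow_le_one γ hT hw) _).trans <|
    (frob_mul_le (norm_expPow_le_one β hU hw) _).trans <|
      frob_mul_le (norm_expPow_le_one l hW hw) _

/-- Splitting off the real powers `exp β` and `exp γ`; on `Re z = 1` the remaining outer factors are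
unitary. -/
lemma interp_eq (hU : Uᴴ * U = 1) (hT : Tᴴ * T = 1) (z : ℂ) :
    interp U β W l T γ V z = expPow U β 1 *
      (expPow U β (z - 1) * (expPow W l z * V) * expPow T γ (z - 1)) * expPow T γ 1 := by
  have h1 : expPow U β z = expPow U β 1 * expPow U β (z - 1) := by
    rw [← expPow_add β hU]; congr 1; ring
  have h2 : expPow T γ z = expPow T γ (z - 1) * expPow T γ 1 := by
    rw [← expPow_add γ hT]; congr 1; ring
  rw [interp, h1, h2]
  simp only [Matrix.mul_assoc]

/-- On the line `Re z = 1`, if `exp (w l) * V` is a contraction there, the PPT condition bounds each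
form by a trace that no longer depends on `V`. -/
lemma norm_interpFun_le (hMΓ : ∀ j, (ptranspose (M j)).PosSemidef)
    (hU : Uᴴ * U = 1) (hT : Tᴴ * T = 1)
    (hV : ∀ w : ℂ, w.re = 1 → ‖expPow W l w * V‖ ≤ 1) {z : ℂ} (hz : z.re = 1) :
    ‖interpFun M a (interp U β W l T γ V) z‖ ≤ ∑ j, Real.exp (a j) *
      ((expPow U β 1 ⊗ₖ (expPow T γ 1)ᵀ)ᴴ * M j * (expPow U β 1 ⊗ₖ (expPow T γ 1)ᵀ)).trace.re := by
  refine (norm_sum_le _ _).trans (Finset.sum_le_sum fun j _ => ?_)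
  rw [norm_mul, Complex.norm_exp, Complex.re_mul_ofReal, hz, one_mul]
  refine mul_le_mul_of_nonneg_left ?_ (Real.exp_nonneg _)
  have hc : ∀ w : ℂ, w.re = 1 →
      ‖expPow U β (w - 1) * (expPow W l w * V) * expPow T γ (w - 1)‖ ≤ 1 := fun w hw =>
    norm_mul_le_one (norm_mul_le_one (norm_expPow_le_one β hU (by simp [hw])) (hV w hw))
      (norm_expPow_le_one γ hT (by simp [hw]))
  rw [interp_eq hU hT, interp_eq hU hT]
  exact norm_sesq_sandwich_le (hMΓ j) _ _ (hc _ (by simpa using hz)) (hc z hz)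

/-- The POVM condition reduces the sum of the traces to the product `tr exp (2 β) * tr exp (2 γ)`. -/
lemma sum_trace_sandwich (hMsum : ∑ j, M j = 1) (hU : Uᴴ * U = 1) (hT : Tᴴ * T = 1) :
    ∑ j, ((expPow U β 1 ⊗ₖ (expPow T γ 1)ᵀ)ᴴ * M j *
      (expPow U β 1 ⊗ₖ (expPow T γ 1)ᵀ)).trace.re =
      (∑ k, Real.exp (2 * β k)) * ∑ k, Real.exp (2 * γ k) := by
  rw [← Complex.re_sum, ← Matrix.trace_sum, ← Finset.sum_mul, ← Finset.mul_sum, hMsum,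
    Matrix.mul_one, Matrix.conjTranspose_kronecker, ← Matrix.mul_kronecker_mul,
    Matrix.trace_kronecker, Matrix.trace_mul_comm, trace_expPow_mul_conjTranspose β hU,
    ← Matrix.trace_transpose, Matrix.transpose_mul]
  have : ((expPow T γ 1)ᵀᴴ)ᵀ = (expPow T γ 1)ᴴ := rfl
  rw [this, Matrix.transpose_transpose, trace_expPow_mul_conjTranspose γ hT, ← Complex.ofReal_mul,
    Complex.ofReal_re]

end core2

open scoped Kronecker in
/-- The three lines bound for the ensemble average of `interpFun`, with the exponents of the matrix
powers and the weights `a` still free. -/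
theorem core_bound {dB dC J m : ℕ} {p : Fin m → ℝ} (hp : ∀ i, 0 ≤ p i) (hpsum : ∑ i, p i = 1)
    {V : Fin m → Matrix (Fin dB) (Fin dC) ℂ} (hV : ∀ i, frob (V i) = 1)
    {M : Fin J → Matrix (Fin dB × Fin dC) (Fin dB × Fin dC) ℂ} (hM : ∀ j, (M j).PosSemidef)
    (hMΓ : ∀ j, (ptranspose (M j)).PosSemidef) (hMsum : ∑ j, M j = 1)
    {U : Matrix (Fin dB) (Fin dB) ℂ} (hU : U * Uᴴ = 1) (β : Fin dB → ℝ)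
    {T : Matrix (Fin dC) (Fin dC) ℂ} (hT : T * Tᴴ = 1) (γ : Fin dC → ℝ)
    {W : Fin m → Matrix (Fin dB) (Fin dB) ℂ} (hW : ∀ i, W i * (W i)ᴴ = 1) (l : Fin m → Fin dB → ℝ)
    (hl : ∀ i, ∀ w : ℂ, w.re = 1 → ‖expPow (W i) (l i) w * V i‖ ≤ 1)
    (a : Fin m → Fin J → ℝ) {K : ℝ} (hK : 0 < K) (haK : ∀ j, ∑ i, p i * Real.exp (a i j) ≤ K)
    {KB KC : ℝ} (hKB : 0 < KB) (hKC : 0 < KC) (hβ : ∑ k, Real.exp (2 * β k) ≤ KB)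
    (hγ : ∑ k, Real.exp (2 * γ k) ≤ KC) :
    ∑ i, p i * (∑ j, a i j * (sesq (M j) (V i) (V i)).re +
      2 * (((V i)ᴴ * (herm U β * V i)).trace.re + ((V i)ᴴ * (herm (W i) (l i) * V i)).trace.re +
        ((V i)ᴴ * (V i * herm T γ)).trace.re)) ≤
    Real.log (K * (KB * KC)) := by
  have hU' := mul_eq_one_comm.1 hU
  have hT' := mul_eq_one_comm.1 hT
  have hW' := fun i => mul_eq_one_comm.1 (hW i)
  set X : Fin m → ℂ → Matrix (Fin dB) (Fin dC) ℂ :=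
    fun i => interp U β (W i) (l i) T γ (V i) with hX
  have hX0 : ∀ i, X i 0 = V i := fun i => by
    simp [hX, interp, expPow_zero _ hU, expPow_zero _ hT, expPow_zero _ (hW i)]
  have hG : StripBdd (fun z => ∑ i, (p i : ℂ) * interpFun M (a i) (X i) z) :=
    StripBdd.sum _ fun i _ => (StripBdd.const _).mul
      (stripBdd_interpFun (stripBdd_interp U β (W i) (l i) T γ (V i)))
  have hnorm : ∀ z, ‖∑ i, (p i : ℂ) * interpFun M (a i) (X i) z‖ ≤
      ∑ i, p i * ‖interpFun M (a i) (X i) z‖ := fun z => by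
    refine (norm_sum_le _ _).trans (Finset.sum_le_sum fun i _ => ?_)
    rw [norm_mul, Complex.norm_real, Real.norm_of_nonneg (hp i)]
  have key := deriv_le_log_of_strip hG (mul_pos hK (mul_pos hKB hKC)) ?_ ?_ ?_
    (HasDerivAt.fun_sum fun i _ => (hasDerivAt_interpFun (a := a i) hMsum (hX0 i)
      (hasDerivAt_interp β (l i) γ (V i) hU (hW i) hT)).const_mul (p i : ℂ))
  · refine le_trans (le_of_eq ?_) key
    rw [Complex.re_sum]
    refine Finset.sum_congr rfl fun i _ => ?_
    rw [Complex.re_ofReal_mul, Complex.add_re, Complex.add_re, Complex.re_sum]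
    have hc : ∀ Y : Matrix (Fin dB) (Fin dC) ℂ,
        (Yᴴ * V i).trace.re = ((V i)ᴴ * Y).trace.re := fun Y => by
      have : (Yᴴ * V i).trace = star ((V i)ᴴ * Y).trace := by
        rw [← Matrix.trace_conjTranspose, Matrix.conjTranspose_mul,
          Matrix.conjTranspose_conjTranspose]
      rw [this]
      exact Complex.conj_re _
    rw [hc]
    simp only [Matrix.mul_add, Matrix.trace_add, Complex.add_re, Complex.re_ofReal_mul]
    ring
  · intro z hz
    refine (hnorm z).trans ?_
    rw [← hpsum]
    exact Finset.sum_le_sum fun i _ => mul_le_of_le_one_right (hp i)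
      (norm_interpFun_le_one hM hMsum hz fun w hw =>
        (frob_interp_le hU' (hW' i) hT' hw).trans (hV i).le)
  · intro z hz
    refine (hnorm z).trans ?_
    have ht : ∀ j, 0 ≤ ((expPow U β 1 ⊗ₖ (expPow T γ 1)ᵀ)ᴴ * M j *
        (expPow U β 1 ⊗ₖ (expPow T γ 1)ᵀ)).trace.re := fun j =>
      (Complex.nonneg_iff.1 ((hM j).conjTranspose_mul_mul_same _).trace_nonneg).1
    have hs := sum_trace_sandwich (β := β) (γ := γ) hMsum hU' hT'
    have h1 := Finset.sum_le_sum fun i (_ : i ∈ Finset.univ) => mul_le_mul_of_nonneg_left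
      (norm_interpFun_le (β := β) (γ := γ) (a := a i) hMΓ hU' hT' (hl i) hz) (hp i)
    refine h1.trans ?_
    simp only [Finset.mul_sum, ← mul_assoc]
    rw [Finset.sum_comm]
    simp only [← Finset.sum_mul]
    refine (Finset.sum_le_sum fun j _ => mul_le_mul_of_nonneg_right (haK j) (ht j)).trans ?_
    rw [← Finset.mul_sum, hs, mul_assoc]
    exact mul_le_mul_of_nonneg_left (mul_le_mul hβ hγ
      (Finset.sum_nonneg fun _ _ => (Real.exp_pos _).le) hKB.le) hK.le
  · simp only [interpFun_zero hMsum (hX0 _) (hV _) hM, mul_one]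
    rw [← Complex.ofReal_sum, hpsum, Complex.ofReal_one]

/-! ### Exponents and entropies -/

/-- Logarithm of the square root of `μ k`, where `μ k = 0` is replaced by `ε`. -/
def halfLog {n : Type*} (ε : ℝ) (μ : n → ℝ) (k : n) : ℝ :=
  Real.log (if 0 < μ k then μ k else ε) / 2

lemma sum_exp_halfLog_le {n : Type*} [Fintype n] {ε : ℝ} (hε : 0 < ε) {μ : n → ℝ}
    (hμ : ∀ k, 0 ≤ μ k) :
    ∑ k, Real.exp (2 * halfLog ε μ k) ≤ ∑ k, μ k + Fintype.card n * ε := by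
  have : ∑ k, μ k + Fintype.card n * ε = ∑ k, (μ k + ε) := by
    rw [Finset.sum_add_distrib]; simp
  rw [this]
  refine Finset.sum_le_sum fun k _ => ?_
  rw [halfLog, mul_div_cancel₀ _ two_ne_zero]
  split_ifs with h
  · rw [Real.exp_log h]; linarith
  · rw [Real.exp_log hε]; linarith [hμ k]

/-- The regularization by `ε` is invisible here, since it only concerns indices with `μ k = 0`. -/
lemma two_mul_sum_halfLog_mul {n : Type*} [Fintype n] (ε : ℝ) {μ : n → ℝ}
    (hμ : ∀ k, 0 ≤ μ k) :
    2 * ∑ k, halfLog ε μ k * μ k = ∑ k, μ k * Real.log (μ k) := by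
  rw [Finset.mul_sum]
  refine Finset.sum_congr rfl fun k _ => ?_
  rw [halfLog]
  split_ifs with h
  · ring
  · rw [le_antisymm (not_lt.1 h) (hμ k)]; simp

section spectral

variable {n : Type*} [Fintype n] [DecidableEq n]

lemma herm_eigenvalues {H : Matrix n n ℂ} (hH : H.IsHermitian) :
    herm (hH.eigenvectorUnitary : Matrix n n ℂ) hH.eigenvalues = H := by
  conv_rhs => rw [hH.spectral_theorem]
  rfl

lemma eigenvectorUnitary_mul {H : Matrix n n ℂ} (hH : H.IsHermitian) :
    (hH.eigenvectorUnitary : Matrix n n ℂ) * (hH.eigenvectorUnitary : Matrix n n ℂ)ᴴ = 1 :=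
  Matrix.mem_unitaryGroup_iff.1 hH.eigenvectorUnitary.2

lemma trace_herm_mul_herm {U : Matrix n n ℂ} (hU : U * Uᴴ = 1) (b μ : n → ℝ) :
    (herm U b * herm U μ).trace.re = ∑ k, b k * μ k := by
  have : herm U b * herm U μ =
      U * (Matrix.diagonal (fun k => (b k : ℂ)) * (Uᴴ * U) *
        Matrix.diagonal (fun k => (μ k : ℂ))) * Uᴴ := by
    simp only [herm, Matrix.mul_assoc]
  rw [this, mul_eq_one_comm.1 hU, Matrix.mul_one, Matrix.diagonal_mul_diagonal,
    Matrix.trace_mul_comm, ← Matrix.mul_assoc, mul_eq_one_comm.1 hU, Matrix.one_mul,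
    Matrix.trace_diagonal, Complex.re_sum]
  exact Finset.sum_congr rfl fun k _ => by rw [← Complex.ofReal_mul, Complex.ofReal_re]

lemma herm_map_star (U : Matrix n n ℂ) (b : n → ℝ) : herm (U.map star) b = (herm U b)ᵀ := by
  rw [herm, herm, Matrix.transpose_mul, Matrix.transpose_mul, Matrix.diagonal_transpose,
    Matrix.mul_assoc]
  congr 2
  ext i j
  simp

lemma map_star_unitary {U : Matrix n n ℂ} (hU : U * Uᴴ = 1) : U.map star * (U.map star)ᴴ = 1 := by
  have h : (U.map star)ᴴ = Uᵀ := by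
    ext i j
    simp
  rw [h, show U.map star = Uᴴᵀ from rfl, ← Matrix.transpose_mul, hU, Matrix.transpose_one]

lemma vnEntropy_mul_log {H : Matrix n n ℂ} (hH : H.IsHermitian) :
    Real.log 2 * vnEntropy H = -∑ k, hH.eigenvalues k * Real.log (hH.eigenvalues k) := by
  have : Real.log 2 ≠ 0 := (Real.log_pos one_lt_two).ne'
  rw [vnEntropy, dif_pos hH, mul_neg, Finset.mul_sum]
  congr 1
  refine Finset.sum_congr rfl fun k _ => ?_
  rw [Real.logb]
  field_simp

/-- For `Re w = 1` the matrix `(V * Vᴴ) ^ (-w / 2) * V` is a contraction (a partial isometry up to a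
unitary). The convention `Real.log 0 = 0` is harmless: it leaves the kernel of `Vᴴ` untouched, and
that part of `V` is zero. -/
lemma norm_expPow_mul_le_one {c : Type*} [Fintype c] [DecidableEq c] {V : Matrix n c ℂ}
    {W : Matrix n n ℂ} (hW : W * Wᴴ = 1) {μ : n → ℝ} (hμ : ∀ k, 0 ≤ μ k)
    (h : herm W μ = V * Vᴴ) {w : ℂ} (hw : w.re = 1) :
    ‖expPow W (fun k => -(Real.log (μ k) / 2)) w * V‖ ≤ 1 := by
  have hW' := mul_eq_one_comm.1 hW
  set d : n → ℂ := fun k => Complex.exp (w * ((-(Real.log (μ k) / 2) : ℝ) : ℂ)) with hd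
  set Q : Matrix n c ℂ := Matrix.diagonal d * (Wᴴ * V) with hQ
  have hQQ : Q * Qᴴ = Matrix.diagonal (fun k => d k * μ k * star (d k)) := by
    have : Q * Qᴴ = Matrix.diagonal d * (Wᴴ * (V * Vᴴ) * W) * (Matrix.diagonal d)ᴴ := by
      simp only [hQ, Matrix.conjTranspose_mul, Matrix.conjTranspose_conjTranspose,
        Matrix.mul_assoc]
    have h2 : Wᴴ * (V * Vᴴ) * W = Matrix.diagonal (fun k => (μ k : ℂ)) := by
      have : Wᴴ * herm W μ * W = (Wᴴ * W) * Matrix.diagonal (fun k => (μ k : ℂ)) * (Wᴴ * W) := by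
        simp only [herm, Matrix.mul_assoc]
      rw [← h, this, hW', Matrix.one_mul, Matrix.mul_one]
    rw [this, h2, Matrix.diagonal_conjTranspose, Matrix.diagonal_mul_diagonal,
      Matrix.diagonal_mul_diagonal]
    rfl
  have hn : ‖Q * Qᴴ‖ ≤ 1 := by
    rw [hQQ, Matrix.l2_opNorm_diagonal]
    refine (pi_norm_le_iff_of_nonneg zero_le_one).2 fun k => ?_
    rw [norm_mul, norm_mul, norm_star, Complex.norm_real, Real.norm_of_nonneg (hμ k), hd,
      Complex.norm_exp, Complex.re_mul_ofReal, hw, one_mul]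
    rcases (hμ k).eq_or_lt with h0 | h0
    · simp [← h0]
    · have : Real.exp (-(Real.log (μ k) / 2)) * μ k * Real.exp (-(Real.log (μ k) / 2)) =
          Real.exp (-Real.log (μ k)) * μ k := by
        rw [mul_right_comm, ← Real.exp_add]; congr 2; ring
      rw [this, Real.exp_neg, Real.exp_log h0, inv_mul_cancel₀ h0.ne']
  have hQ1 : ‖Q‖ ≤ 1 := by
    have := Matrix.l2_opNorm_conjTranspose_mul_self Qᴴ
    rw [Matrix.conjTranspose_conjTranspose, Matrix.l2_opNorm_conjTranspose] at this
    nlinarith [norm_nonneg Q]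
  have he : expPow W (fun k => -(Real.log (μ k) / 2)) w * V = W * Q := by
    simp only [expPow, hQ, hd, Matrix.mul_assoc]
  rw [he]
  exact norm_mul_le_one (norm_le_one_of_unitary hW') hQ1

end spectral

section classical

variable {m J : ℕ} {p : Fin m → ℝ} {s : Fin m → Fin J → ℝ}

lemma log_two_mul_shannonEntropy {ι : Type*} [Fintype ι] (q : ι → ℝ) :
    Real.log 2 * shannonEntropy q = -∑ x, q x * Real.log (q x) := by
  have : Real.log 2 ≠ 0 := (Real.log_pos one_lt_two).ne'
  rw [shannonEntropy, mul_neg, Finset.mul_sum]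
  congr 1
  refine Finset.sum_congr rfl fun k _ => ?_
  rw [Real.logb]
  field_simp

/-- The logarithm of `P(j | i) / q j`, where `s i j = P(j | i)` is the conditional distribution and `q`
the marginal of the joint distribution `p i * s i j`. Pairs of probability zero get the value
`log ε`. -/
def logRatio (ε : ℝ) (p : Fin m → ℝ) (s : Fin m → Fin J → ℝ) (i : Fin m) (j : Fin J) : ℝ :=
  Real.log (if 0 < p i * s i j then s i j / ∑ i', p i' * s i' j else ε)

lemma sum_exp_logRatio_le {ε : ℝ} (hε : 0 < ε) (hp : ∀ i, 0 ≤ p i) (hpsum : ∑ i, p i = 1)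
    (hs : ∀ i j, 0 ≤ s i j) (j : Fin J) :
    ∑ i, p i * Real.exp (logRatio ε p s i j) ≤ 1 + ε := by
  have hq : 0 ≤ ∑ i, p i * s i j := Finset.sum_nonneg fun i _ => mul_nonneg (hp i) (hs i j)
  calc ∑ i, p i * Real.exp (logRatio ε p s i j)
      ≤ ∑ i, (p i * s i j / (∑ i', p i' * s i' j) + p i * ε) := by
        refine Finset.sum_le_sum fun i _ => ?_
        rw [logRatio]
        have hpe := mul_nonneg (hp i) hε.le
        split_ifs with h
        · have hs0 : 0 < s i j := pos_of_mul_pos_right h (hp i)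
          have hq0 : 0 < ∑ i', p i' * s i' j := h.trans_le <|
            Finset.single_le_sum (f := fun i => p i * s i j)
              (fun i _ => mul_nonneg (hp i) (hs i j)) (Finset.mem_univ i)
          rw [Real.exp_log (div_pos hs0 hq0), mul_div_assoc]
          linarith
        · rw [Real.exp_log hε]
          have := div_nonneg (mul_nonneg (hp i) (hs i j)) hq
          linarith
    _ = (∑ i, p i * s i j) / (∑ i, p i * s i j) + ε := by
        rw [Finset.sum_add_distrib, ← Finset.sum_div, ← Finset.sum_mul, hpsum, one_mul]
    _ ≤ 1 + ε := by linarith [div_self_le_one (∑ i, p i * s i j)]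

/-- The mutual information as the mean of the log-likelihood ratio. -/
lemma sum_logRatio_eq (ε : ℝ) (hp : ∀ i, 0 ≤ p i)
    (hs : ∀ i j, 0 ≤ s i j) (hs1 : ∀ i, ∑ j, s i j = 1) :
    ∑ i, p i * ∑ j, logRatio ε p s i j * s i j = Real.log 2 *
      (shannonEntropy (fun i => ∑ j, p i * s i j) + shannonEntropy (fun j => ∑ i, p i * s i j) -
        shannonEntropy (fun ij : Fin m × Fin J => p ij.1 * s ij.1 ij.2)) := by
  have hterm : ∀ i j, p i * (logRatio ε p s i j * s i j) =
      p i * s i j * Real.log (p i * s i j) - p i * s i j * Real.log (p i) -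
        p i * s i j * Real.log (∑ i', p i' * s i' j) := by
    intro i j
    rw [logRatio]
    split_ifs with h
    · have hs0 : 0 < s i j := pos_of_mul_pos_right h (hp i)
      have hp0 : 0 < p i := pos_of_mul_pos_left h (hs i j)
      have hq0 : 0 < ∑ i', p i' * s i' j := h.trans_le <|
        Finset.single_le_sum (f := fun i => p i * s i j)
          (fun i _ => mul_nonneg (hp i) (hs i j)) (Finset.mem_univ i)
      rw [Real.log_div hs0.ne' hq0.ne', Real.log_mul hp0.ne' hs0.ne']
      ring
    · have h0 : p i * s i j = 0 := le_antisymm (not_lt.1 h) (mul_nonneg (hp i) (hs i j))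
      rw [h0, mul_left_comm, h0]
      simp
  have hX : ∀ i, ∑ j, p i * s i j = p i := fun i => by rw [← Finset.mul_sum, hs1, mul_one]
  simp only [mul_sub, mul_add, log_two_mul_shannonEntropy, hX, Finset.mul_sum, hterm,
    Finset.sum_sub_distrib, ← Finset.sum_mul, Fintype.sum_prod_type]
  rw [Finset.sum_comm (f := fun i j => p i * s i j * Real.log (∑ i', p i' * s i' j))]
  simp only [← Finset.sum_mul]
  ring

end classical

section states

variable {dB dC : ℕ}

/-- The coefficient matrix of a vector of `ℂ^dB ⊗ ℂ^dC`. -/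
def vecMat (v : Fin dB × Fin dC → ℂ) : Matrix (Fin dB) (Fin dC) ℂ :=
  Matrix.of fun b c => v (b, c)

lemma frob_vecMat {v : Fin dB × Fin dC → ℂ} (hv : IsUnitVec v) : frob (vecMat v) = 1 := by
  rw [← hv, Fintype.sum_prod_type]
  simp [frob, vecMat, Complex.normSq_eq_norm_sq]

lemma ptraceC_pureState (v : Fin dB × Fin dC → ℂ) :
    ptraceC (pureState v) = vecMat v * (vecMat v)ᴴ := by
  ext i k
  simp [ptraceC, pureState, vecMat, Matrix.mul_apply, Matrix.vecMulVec_apply]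

lemma ptraceC_average {m : ℕ} (p : Fin m → ℝ) (v : Fin m → Fin dB × Fin dC → ℂ) :
    ptraceC (∑ i, p i • pureState (v i)) = ∑ i, p i • (vecMat (v i) * (vecMat (v i))ᴴ) := by
  ext b b'
  simp only [ptraceC, Matrix.sum_apply, Matrix.smul_apply, pureState, vecMat, Matrix.mul_apply,
    Matrix.vecMulVec_apply, Matrix.conjTranspose_apply, Matrix.of_apply, Pi.star_apply]
  rw [Finset.sum_comm]
  simp only [Finset.smul_sum]

lemma ptraceB_average {m : ℕ} (p : Fin m → ℝ) (v : Fin m → Fin dB × Fin dC → ℂ) :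
    ptraceB (∑ i, p i • pureState (v i)) = ∑ i, p i • ((vecMat (v i))ᴴ * vecMat (v i))ᵀ := by
  ext b b'
  simp only [ptraceB, Matrix.sum_apply, Matrix.smul_apply, pureState, vecMat, Matrix.mul_apply,
    Matrix.vecMulVec_apply, Matrix.conjTranspose_apply, Matrix.of_apply, Pi.star_apply,
    Matrix.transpose_apply]
  rw [Finset.sum_comm]
  simp only [Finset.smul_sum, mul_comm]

lemma trace_pureState_mul (v : Fin dB × Fin dC → ℂ)
    (N : Matrix (Fin dB × Fin dC) (Fin dB × Fin dC) ℂ) :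
    (pureState v * N).trace = sesq N (vecMat v) (vecMat v) := by
  rw [pureState, Matrix.trace_mul_comm, Matrix.mul_vecMulVec, Matrix.trace_vecMulVec,
    dotProduct_comm, sesq_eq_dotProduct]
  rfl

end states

/-! ### The information bound -/

/-- PPT version of the Badziąg et al. bound: for an ensemble (p i, v i)
measured by a PPT POVM (M j), the mutual information of the induced joint distribution is
bounded by S(ρ_B) + S(ρ_C) − ∑ p i · E(v i). -/
theorem stmt13 (dB dC : ℕ) (hB : 0 < dB) (hC : 0 < dC) (m J : ℕ) (hm : 0 < m) (hJ : 0 < J)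
    (p : Fin m → ℝ) (hp : ∀ i, 0 ≤ p i) (hpsum : ∑ i, p i = 1)
    (v : Fin m → Fin dB × Fin dC → ℂ) (hv : ∀ i, IsUnitVec (v i))
    (M : Fin J → Matrix (Fin dB × Fin dC) (Fin dB × Fin dC) ℂ)
    (hM : ∀ j, (M j).PosSemidef) (hMΓ : ∀ j, (ptranspose (M j)).PosSemidef)
    (hMsum : ∑ j, M j = 1) :
    shannonEntropy (fun i : Fin m =>
        ∑ j : Fin J, p i * (Matrix.trace (pureState (v i) * M j)).re) +
      shannonEntropy (fun j : Fin J =>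
        ∑ i : Fin m, p i * (Matrix.trace (pureState (v i) * M j)).re) -
      shannonEntropy (fun ij : Fin m × Fin J =>
        p ij.1 * (Matrix.trace (pureState (v ij.1) * M ij.2)).re)
    ≤ vnEntropy (ptraceC (∑ i, p i • pureState (v i))) +
        vnEntropy (ptraceB (∑ i, p i • pureState (v i))) -
        ∑ i, p i * entg (v i) := by
  set V : Fin m → Matrix (Fin dB) (Fin dC) ℂ := fun i => vecMat (v i) with hV
  have hfrob : ∀ i, frob (V i) = 1 := fun i => frob_vecMat (hv i)
  set s : Fin m → Fin J → ℝ := fun i j => (Matrix.trace (pureState (v i) * M j)).re with hs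
  have hs_eq : ∀ i j, s i j = (sesq (M j) (V i) (V i)).re := fun i j => by
    rw [hs, hV]; simp only [trace_pureState_mul]
  have hs0 : ∀ i j, 0 ≤ s i j := fun i j => by
    rw [hs_eq]; exact (sesq_self (hM j) _).2
  have hs1 : ∀ i, ∑ j, s i j = 1 := fun i => by
    simp only [hs_eq]
    rw [← Complex.re_sum, sum_sesq M hMsum, trace_conjTranspose_mul_self_re, hfrob]
  set ρB := ptraceC (∑ i, p i • pureState (v i)) with hρB
  set ρC := ptraceB (∑ i, p i • pureState (v i)) with hρC
  rw [ptraceC_average] at hρB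
  rw [ptraceB_average] at hρC
  have psdB : ρB.PosSemidef := by
    rw [hρB]
    exact Matrix.posSemidef_sum _ fun i _ =>
      (Matrix.posSemidef_self_mul_conjTranspose _).smul (hp i)
  have psdC : ρC.PosSemidef := by
    rw [hρC]
    exact Matrix.posSemidef_sum _ fun i _ =>
      (Matrix.posSemidef_conjTranspose_mul_self _).transpose.smul (hp i)
  have psdi : ∀ i, (V i * (V i)ᴴ).PosSemidef := fun i =>
    Matrix.posSemidef_self_mul_conjTranspose _
  set μ := psdB.1.eigenvalues with hμ
  set ν := psdC.1.eigenvalues with hν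
  have hμ0 : ∀ k, 0 ≤ μ k := psdB.eigenvalues_nonneg
  have hν0 : ∀ k, 0 ≤ ν k := psdC.eigenvalues_nonneg
  obtain ⟨U, hUU, hUρ⟩ : ∃ U : Matrix (Fin dB) (Fin dB) ℂ, U * Uᴴ = 1 ∧ herm U μ = ρB :=
    ⟨psdB.1.eigenvectorUnitary, eigenvectorUnitary_mul psdB.1, herm_eigenvalues psdB.1⟩
  obtain ⟨T, hTT, hTρ⟩ : ∃ T : Matrix (Fin dC) (Fin dC) ℂ, T * Tᴴ = 1 ∧ herm T ν = ρC :=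
    ⟨psdC.1.eigenvectorUnitary, eigenvectorUnitary_mul psdC.1, herm_eigenvalues psdC.1⟩
  -- Averaging the local terms over the ensemble replaces `V i` by the reduced states.
  have avgB : ∀ A : Matrix (Fin dB) (Fin dB) ℂ,
      ∑ i, p i * ((V i)ᴴ * (A * V i)).trace.re = (A * ρB).trace.re := fun A => by
    rw [hρB, Finset.mul_sum, Matrix.trace_sum, Complex.re_sum]
    refine Finset.sum_congr rfl fun i _ => ?_
    rw [Matrix.mul_smul, Matrix.trace_smul, Complex.smul_re, Matrix.trace_mul_comm,
      Matrix.mul_assoc]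
    rfl
  have avgC : ∀ A : Matrix (Fin dC) (Fin dC) ℂ,
      ∑ i, p i * ((V i)ᴴ * (V i * Aᵀ)).trace.re = (A * ρC).trace.re := fun A => by
    rw [hρC, Finset.mul_sum, Matrix.trace_sum, Complex.re_sum]
    refine Finset.sum_congr rfl fun i _ => ?_
    rw [Matrix.mul_smul, Matrix.trace_smul, Complex.smul_re, ← Matrix.trace_transpose,
      ← Matrix.mul_assoc, Matrix.transpose_mul, Matrix.transpose_transpose]
    rfl
  have sumμ : ∑ k, μ k = 1 := by
    have h1 := avgB 1
    have h2 := trace_herm_mul_herm hUU (fun _ => 1) μ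
    have h3 : herm U (fun _ => 1) = 1 := by simp [herm, hUU]
    rw [h3, hUρ, ← h1] at h2
    simp only [Matrix.one_mul, trace_conjTranspose_mul_self_re, hfrob, mul_one, one_mul,
      hpsum] at h2
    exact h2.symm
  have sumν : ∑ k, ν k = 1 := by
    have h1 := avgC 1
    have h2 := trace_herm_mul_herm hTT (fun _ => 1) ν
    have h3 : herm T (fun _ => 1) = 1 := by simp [herm, hTT]
    rw [h3, hTρ, ← h1] at h2
    simp only [Matrix.transpose_one, Matrix.mul_one, trace_conjTranspose_mul_self_re, hfrob,
      mul_one, one_mul, hpsum] at h2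
    exact h2.symm
  set lam : Fin m → Fin dB → ℝ := fun i => (psdi i).1.eigenvalues with hlam
  obtain ⟨W, hW⟩ : ∃ W : Fin m → Matrix (Fin dB) (Fin dB) ℂ,
      ∀ i, W i * (W i)ᴴ = 1 ∧ herm (W i) (lam i) = V i * (V i)ᴴ :=
    ⟨fun i => (psdi i).1.eigenvectorUnitary, fun i =>
      ⟨eigenvectorUnitary_mul (psdi i).1, herm_eigenvalues (psdi i).1⟩⟩
  have hWW := fun i => (hW i).1
  have hWρ := fun i => (hW i).2
  -- The middle factor accounts for the entanglement entropies, `V i * (V i)ᴴ` being the reduced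
  -- state of the `i`-th signal.
  have hE : ∀ i, 2 * ((V i)ᴴ * (herm (W i) (fun k => -(Real.log (lam i k) / 2)) * V i)).trace.re =
      Real.log 2 * entg (v i) := fun i => by
    have h1 : ((V i)ᴴ * (herm (W i) (fun k => -(Real.log (lam i k) / 2)) * V i)).trace =
        (herm (W i) (fun k => -(Real.log (lam i k) / 2)) * herm (W i) (lam i)).trace := by
      rw [Matrix.trace_mul_comm, Matrix.mul_assoc, hWρ]
    rw [h1, trace_herm_mul_herm (hWW i), entg, ptraceC_pureState, vnEntropy_mul_log (psdi i).1,
      Finset.mul_sum, ← Finset.sum_neg_distrib]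
    exact Finset.sum_congr rfl fun k _ => by ring
  have hSB : Real.log 2 * vnEntropy ρB = -∑ k, μ k * Real.log (μ k) := vnEntropy_mul_log psdB.1
  have hSC : Real.log 2 * vnEntropy ρC = -∑ k, ν k * Real.log (ν k) := vnEntropy_mul_log psdC.1
  -- The derivative bound at fixed `ε`. The right factor of `interp` acts by `σ_Cᵀ`, whose eigenbasis
  -- is the entrywise conjugate of the eigenbasis `T` of `σ_C`.
  have bound : ∀ ε : ℝ, 0 < ε →
      Real.log 2 * (shannonEntropy (fun i => ∑ j, p i * s i j) +
        shannonEntropy (fun j => ∑ i, p i * s i j) -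
        shannonEntropy (fun ij : Fin m × Fin J => p ij.1 * s ij.1 ij.2) -
        (vnEntropy ρB + vnEntropy ρC - ∑ i, p i * entg (v i))) ≤
      Real.log ((1 + ε) * ((1 + dB * ε) * (1 + dC * ε))) := by
    intro ε hε
    have h := core_bound hp hpsum hfrob hM hMΓ hMsum hUU (halfLog ε μ) (map_star_unitary hTT)
      (halfLog ε ν) hWW (fun i k => -(Real.log (lam i k) / 2))
      (fun i w hw => norm_expPow_mul_le_one (hWW i) (psdi i).eigenvalues_nonneg (hWρ i) hw)
      (logRatio ε p s) (K := 1 + ε) (KB := 1 + dB * ε) (KC := 1 + dC * ε) (by positivity)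
      (sum_exp_logRatio_le hε hp hpsum hs0) (by positivity) (by positivity)
      (by simpa [sumμ] using sum_exp_halfLog_le hε hμ0)
      (by simpa [sumν] using sum_exp_halfLog_le hε hν0)
    refine le_trans (le_of_eq ?_) h
    have h1 := sum_logRatio_eq ε hp hs0 hs1
    have h2 := two_mul_sum_halfLog_mul ε hμ0
    have h3 := two_mul_sum_halfLog_mul ε hν0
    rw [← trace_herm_mul_herm hUU, hUρ, ← avgB] at h2
    rw [← trace_herm_mul_herm hTT, hTρ, ← avgC] at h3
    have two : ∀ t : Fin m → ℝ, ∑ i, p i * (2 * t i) = 2 * ∑ i, p i * t i := fun t => by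
      rw [Finset.mul_sum]
      exact Finset.sum_congr rfl fun i _ => by ring
    have hE' : ∑ i, p i * (Real.log 2 * entg (v i)) = Real.log 2 * ∑ i, p i * entg (v i) := by
      rw [Finset.mul_sum]
      exact Finset.sum_congr rfl fun i _ => by ring
    simp only [← hs_eq, mul_add, hE, Finset.sum_add_distrib, herm_map_star]
    rw [two, two, h1, h2, h3, hE']
    linear_combination -hSB - hSC
  have hlim : Filter.Tendsto
      (fun ε : ℝ => Real.log ((1 + ε) * ((1 + dB * ε) * (1 + dC * ε))))
      (nhdsWithin 0 (Set.Ioi 0)) (nhds 0) := by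
    have hc : ContinuousAt
        (fun ε : ℝ => Real.log ((1 + ε) * ((1 + dB * ε) * (1 + dC * ε)))) 0 :=
      ContinuousAt.log (by fun_prop) (by norm_num)
    have := hc.tendsto
    simp only [add_zero, mul_zero, mul_one, Real.log_one] at this
    exact this.mono_left nhdsWithin_le_nhds
  have hfin := ge_of_tendsto hlim (eventually_nhdsWithin_of_forall fun ε hε => bound ε hε)
  have := nonpos_of_mul_nonpos_right hfin (Real.log_pos one_lt_two)
  linarith
end
end

section
/- Let dB, dC be positive integers, c a real number, and T a ℂ-subspace (Submodule ℂ) of ((Fin dB) × (Fin dC) → ℂ) such that every unit vector w ∈ T satisfies E(w) ≥ c. Let ρ be a density matrix on (Fin dB) × (Fin dC) whose range (as a linear map) is contained in T. Then for every finite pure-state decomposition of ρ — i.e. every positive integer m, weights p : Fin m → ℝ with p i > 0 and ∑ i, p i = 1, and unit vectors v_1, …, v_m with ρ = ∑ i, p i • φ_{v_i} — one has ∑ i, p i * E(v_i) ≥ c. In particular the entanglement of formation of ρ is at least c. -/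
/-!
Each vector `v i` of a pure-state decomposition of `ρ` with positive weights lies in the range of
`ρ` (`mem_range_mixture`), hence in `T`. So every term of the average `∑ i, p i * entg (v i)` has
`entg (v i) ≥ c`, and a convex combination of numbers that are at least `c` is at least `c`.
-/

open scoped BigOperators Classical ComplexOrder Matrix

noncomputable section

/-- Every vector occurring in a decomposition with positive weights lies in the range of the mixture.
Put `A` for the matrix with columns `√(p i) • v i`; then `∑ i, p i • pureState (v i) = A * Aᴴ`, and
`A * Aᴴ` has the same rank, hence the same range, as `A`. -/
lemma mem_range_mixture {ι : Type*} [Fintype ι] [DecidableEq ι] {m : ℕ} (p : Fin m → ℝ)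
    (hp : ∀ i, 0 < p i) (v : Fin m → ι → ℂ) (i : Fin m) :
    v i ∈ LinearMap.range (Matrix.toLin' (∑ i, p i • pureState (v i))) := by
  set A : Matrix ι (Fin m) ℂ := Matrix.of fun x j => (Real.sqrt (p j) : ℂ) * v j x with hA
  have hAA : ∑ i, p i • pureState (v i) = A * Aᴴ := by
    ext x y
    simp only [Matrix.sum_apply, Matrix.mul_apply, Matrix.conjTranspose_apply, Matrix.smul_apply,
      pureState, Matrix.vecMulVec_apply, hA, Matrix.of_apply, Pi.star_apply]
    refine Finset.sum_congr rfl fun j _ => ?_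
    have h : ((p j : ℝ) : ℂ) = (Real.sqrt (p j) : ℂ) * (Real.sqrt (p j) : ℂ) := by
      rw [← Complex.ofReal_mul, Real.mul_self_sqrt (hp j).le]
    rw [Complex.real_smul, h, star_mul', Complex.star_def, Complex.conj_ofReal]
    ring
  have hle : LinearMap.range (A * Aᴴ).mulVecLin ≤ LinearMap.range A.mulVecLin := by
    rw [Matrix.mulVecLin_mul]
    exact LinearMap.range_comp_le_range _ _
  have heq : LinearMap.range (A * Aᴴ).mulVecLin = LinearMap.range A.mulVecLin :=
    Submodule.eq_of_le_of_finrank_eq hle (Matrix.rank_self_mul_conjTranspose A)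
  rw [hAA, Matrix.toLin'_apply', heq]
  have hs : (Real.sqrt (p i) : ℂ) ≠ 0 :=
    Complex.ofReal_ne_zero.mpr (Real.sqrt_pos.mpr (hp i)).ne'
  refine ⟨Pi.single i (Real.sqrt (p i) : ℂ)⁻¹, ?_⟩
  ext x
  simp only [Matrix.mulVecLin_apply, Matrix.mulVec_single, Matrix.col_apply, Pi.smul_apply, hA,
    Matrix.of_apply, MulOpposite.smul_eq_mul_unop, MulOpposite.unop_op]
  field_simp

/-- if every unit vector of a subspace T has entanglement at least c,
then every finite pure-state decomposition of a density matrix supported on T has average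
entanglement at least c (hence its entanglement of formation is at least c). -/
theorem stmt14 (dB dC : ℕ) (hB : 0 < dB) (hC : 0 < dC) (c : ℝ)
    (T : Submodule ℂ ((Fin dB × Fin dC) → ℂ))
    (hT : ∀ w ∈ T, IsUnitVec w → entg w ≥ c)
    (ρ : Matrix (Fin dB × Fin dC) (Fin dB × Fin dC) ℂ) (hρ : IsDensityMatrix ρ)
    (hrange : LinearMap.range (Matrix.toLin' ρ) ≤ T)
    (m : ℕ) (hm : 0 < m) (p : Fin m → ℝ) (hp : ∀ i, 0 < p i) (hpsum : ∑ i, p i = 1)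
    (v : Fin m → Fin dB × Fin dC → ℂ) (hv : ∀ i, IsUnitVec (v i))
    (hdecomp : ρ = ∑ i, p i • pureState (v i)) :
    c ≤ ∑ i, p i * entg (v i) := by
  have hle : ∀ i, c ≤ entg (v i) := fun i =>
    hT (v i) (hrange (hdecomp ▸ mem_range_mixture p hp v i)) (hv i)
  calc c = ∑ i, p i * c := by rw [← Finset.sum_mul, hpsum, one_mul]
    _ ≤ ∑ i, p i * entg (v i) :=
        Finset.sum_le_sum fun i _ => mul_le_mul_of_nonneg_left (hle i) (hp i).le
end
end
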